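/- arXiv:2410.14176 — 6 statements merged into one kernel-verified Lean document; each statement's English description precedes it below -/
import Mathlib

section
/- Let Ω ⊆ ℝ³ be open, μ, λ, μ_c, α, β, γ ∈ ℝ, and u, ω : ℝ³ → ℝ³ differentiable on Ω. Then at every point of Ω the Cosserat energy integrand satisfies ½⟨C₁(grad u − mskw ω), grad u − mskw ω⟩ + ½⟨C₂(grad ω), grad ω⟩ = μ‖sym grad u‖² + (λ/2)(div u)² + μ_c‖½curl u − ω‖² + ((γ+β)/2)‖sym grad ω‖² + ((γ−β)/4)‖curl ω‖² + (α/2)(div ω)², where ‖·‖ is the Frobenius norm on matrices and the Euclidean norm on vectors. -/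
open Matrix

noncomputable section

/-- Vectors in ℝ³. -/
abbrev V3 := Fin 3 → ℝ
/-- 3×3 real matrices. -/
abbrev M3 := Matrix (Fin 3) (Fin 3) ℝ

/-- Euclidean inner product on ℝ³. -/
def dot3 (u v : V3) : ℝ := ∑ i, u i * v i

/-- Frobenius inner product ⟨A,B⟩ = tr(AᵀB). -/
def frobInner (A B : M3) : ℝ := Matrix.trace (Aᵀ * B)

/-- Symmetric part of a matrix. -/
def symPart (A : M3) : M3 := (1/2 : ℝ) • (A + Aᵀ)

/-- Skew-symmetric part of a matrix. -/
def skwPart (A : M3) : M3 := (1/2 : ℝ) • (A - Aᵀ)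

/-- mskw : ℝ³ → ℝ^{3×3}. -/
def mskw (u : V3) : M3 :=
  !![0, -u 2, u 1; u 2, 0, -u 0; -u 1, u 0, 0]

/-- vskw : ℝ^{3×3} → ℝ³. -/
def vskw (A : M3) : V3 :=
  ![(A 2 1 - A 1 2)/2, (A 0 2 - A 2 0)/2, (A 1 0 - A 0 1)/2]

/-- Partial derivative ∂ⱼ f (Fréchet derivative in the j-th coordinate direction). -/
def pd (j : Fin 3) (f : V3 → ℝ) (x : V3) : ℝ := fderiv ℝ f x (Pi.single j 1)

/-- Jacobian matrix (grad v)ᵢⱼ = ∂ⱼ vᵢ of a vector field. -/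
def vgrad (v : V3 → V3) (x : V3) : M3 :=
  Matrix.of fun i j => pd j (fun y => v y i) x

/-- Divergence of a vector field. -/
def vdiv (v : V3 → V3) (x : V3) : ℝ :=
  pd 0 (fun y => v y 0) x + pd 1 (fun y => v y 1) x + pd 2 (fun y => v y 2) x

/-- Curl of a vector field. -/
def vcurl (v : V3 → V3) (x : V3) : V3 :=
  ![pd 1 (fun y => v y 2) x - pd 2 (fun y => v y 1) x,
    pd 2 (fun y => v y 0) x - pd 0 (fun y => v y 2) x,
    pd 0 (fun y => v y 1) x - pd 1 (fun y => v y 0) x]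

/-- Row-wise curl of a matrix field. -/
def mcurl (M : V3 → M3) (x : V3) : M3 :=
  Matrix.of fun i j => vcurl (fun y => M y i) x j

/-- Row-wise divergence of a matrix field. -/
def mdiv (M : V3 → M3) (x : V3) : V3 :=
  fun i => vdiv (fun y => M y i) x

/-- The algebraic operator 𝒮(A) = Aᵀ − (tr A)·I. -/
def Sop (A : M3) : M3 := Aᵀ - (Matrix.trace A) • (1 : M3)

/-- The inverse 𝒮⁻¹(B) = Bᵀ − ½(tr B)·I. -/
def Sinv (B : M3) : M3 := Bᵀ - ((1/2 : ℝ) * Matrix.trace B) • (1 : M3)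

/-- Cosserat material law C₁(ε) = 2μ sym ε + λ(tr ε)I + μ_c skw ε. -/
def C1 (μ lam μc : ℝ) (ε : M3) : M3 :=
  (2*μ) • symPart ε + (lam * Matrix.trace ε) • (1 : M3) + μc • skwPart ε

/-- Elasticity tensor 𝒞(ε) = 2μ sym ε + λ(tr ε)I. -/
def Cel (μ lam : ℝ) (ε : M3) : M3 :=
  (2*μ) • symPart ε + (lam * Matrix.trace ε) • (1 : M3)

/-- Curvature material law C₂(ε) = (γ+β) sym ε + α(tr ε)I + (γ−β) skw ε. -/
def C2mat (α β γ : ℝ) (ε : M3) : M3 :=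
  (γ+β) • symPart ε + (α * Matrix.trace ε) • (1 : M3) + (γ-β) • skwPart ε

/-- Splitting of the full Cosserat energy integrand. -/
theorem stmt5 (Ω : Set V3) (hΩ : IsOpen Ω) (μ lam μc α β γ : ℝ)
    (u ω : V3 → V3) (hu : DifferentiableOn ℝ u Ω)
    (hω : DifferentiableOn ℝ ω Ω) :
    ∀ x ∈ Ω,
      (1/2) * frobInner (C1 μ lam μc (vgrad u x - mskw (ω x)))
          (vgrad u x - mskw (ω x)) +
      (1/2) * frobInner (C2mat α β γ (vgrad ω x)) (vgrad ω x) =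
        μ * frobInner (symPart (vgrad u x)) (symPart (vgrad u x)) +
        (lam/2) * (vdiv u x)^2 +
        μc * dot3 ((1/2 : ℝ) • vcurl u x - ω x) ((1/2 : ℝ) • vcurl u x - ω x) +
        ((γ+β)/2) * frobInner (symPart (vgrad ω x)) (symPart (vgrad ω x)) +
        ((γ-β)/4) * dot3 (vcurl ω x) (vcurl ω x) +
        (α/2) * (vdiv ω x)^2 := by
  intro x _
  simp only [frobInner, C1, C2mat, symPart, skwPart, mskw, vgrad, vdiv, vcurl, dot3,
    Matrix.trace, Matrix.diag, Matrix.mul_apply, Fin.sum_univ_three, Matrix.transpose_apply,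
    Matrix.add_apply, Matrix.sub_apply, Matrix.smul_apply, Matrix.of_apply, Matrix.one_apply,
    Pi.sub_apply, Pi.smul_apply, smul_eq_mul]
  simp
  ring
end
end

section
/- Let Ω ⊆ ℝ³ be open and τ : ℝ³ → ℝ^{3×3} a differentiable matrix field on Ω. Then at every point of Ω, div(𝒮 τ) = 2 vskw(curl τ), where 𝒮(A) = Aᵀ − (tr A)I and curl and div act row-wise on matrix fields; that is, the algebraic map 𝒮 anticommutes (in this precise sense) with the exterior derivatives curl and div of the vector-valued de Rham complex. -/
open Matrix

noncomputable section

/-- div(𝒮 τ) = 2 vskw(curl τ) for a differentiable matrix field τ. -/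
theorem stmt7 (Ω : Set V3) (hΩ : IsOpen Ω) (τ : V3 → M3)
    (hτ : ∀ i j, DifferentiableOn ℝ (fun y => τ y i j) Ω) :
    ∀ x ∈ Ω, mdiv (fun y => Sop (τ y)) x = (2 : ℝ) • vskw (mcurl τ x) := by
  intro x hx
  have hd : ∀ i j, DifferentiableAt ℝ (fun y => τ y i j) x := fun i j =>
    (hτ i j).differentiableAt (hΩ.mem_nhds hx)
  have key : ∀ i j k : Fin 3, pd k (fun y => Sop (τ y) i j) x =
      pd k (fun y => τ y j i) x -
        (pd k (fun y => τ y 0 0) x + pd k (fun y => τ y 1 1) x + pd k (fun y => τ y 2 2) x)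
          * (1 : M3) i j := by
    intro i j k
    have h : HasFDerivAt (fun y => Sop (τ y) i j)
        (fderiv ℝ (fun y => τ y j i) x -
          ((1 : M3) i j) • (fderiv ℝ (fun y => τ y 0 0) x + fderiv ℝ (fun y => τ y 1 1) x
            + fderiv ℝ (fun y => τ y 2 2) x)) x := by
      have h1 := (hd j i).hasFDerivAt.sub
        (((((hd 0 0).hasFDerivAt.add (hd 1 1).hasFDerivAt).add
          (hd 2 2).hasFDerivAt)).const_smul ((1 : M3) i j))
      refine h1.congr_of_eventuallyEq (Filter.Eventually.of_forall fun y => ?_)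
      simp [Sop, Matrix.trace, Fin.sum_univ_three]
      ring
    unfold pd
    rw [h.fderiv]
    simp
    ring
  ext i
  simp only [mdiv, vdiv, key]
  fin_cases i <;> simp [vskw, mcurl, vcurl, Matrix.one_apply] <;> ring
end
end

section
/- Let Ω ⊆ ℝ³ be open, u : ℝ³ → ℝ³ twice continuously differentiable on Ω, and ω : ℝ³ → ℝ³ continuously differentiable on Ω. Then at every point of Ω the first twisted de Rham composition vanishes: curl(grad u − mskw ω) = (grad ω)ᵀ − (div ω)·I, i.e. curl(grad u − mskw ω) − 𝒮(grad ω)·(−1)·(−1) recovers exactly the algebraic term −curl(mskw ω); in particular the composition of the twisted differentials d_V⁰(u,ω) = (grad u − mskw ω, grad ω) followed by the matching first component of d_V¹ is zero. -/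
open Matrix

noncomputable section

theorem aux_diff (f : V3 → ℝ) (x : V3) (hf : ContDiffAt ℝ 2 f x) (j : Fin 3) :
    DifferentiableAt ℝ (fun y => pd j f y) x := by
  have h : DifferentiableAt ℝ (fderiv ℝ f) x :=
    (hf.fderiv_right (m := 1) (by norm_num)).differentiableAt (by norm_num)
  unfold pd
  exact h.clm_apply (differentiableAt_const _)

theorem aux_symm (f : V3 → ℝ) (x : V3) (hf : ContDiffAt ℝ 2 f x) (j k : Fin 3) :
    pd k (fun y => pd j f y) x = pd j (fun y => pd k f y) x := by
  have h : DifferentiableAt ℝ (fderiv ℝ f) x :=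
    (hf.fderiv_right (m := 1) (by norm_num)).differentiableAt (by norm_num)
  have hs : IsSymmSndFDerivAt ℝ f x := hf.isSymmSndFDerivAt (by simp)
  unfold pd
  rw [fderiv_clm_apply h (differentiableAt_const _),
    fderiv_clm_apply h (differentiableAt_const _)]
  simpa using hs.eq (Pi.single k 1) (Pi.single j 1)

theorem aux_sub (f g : V3 → ℝ) (x : V3) (hf : DifferentiableAt ℝ f x)
    (hg : DifferentiableAt ℝ g x) (k : Fin 3) :
    pd k (fun y => f y - g y) x = pd k f x - pd k g x := by
  unfold pd
  rw [fderiv_fun_sub hf hg]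
  rfl

theorem aux_add (f g : V3 → ℝ) (x : V3) (hf : DifferentiableAt ℝ f x)
    (hg : DifferentiableAt ℝ g x) (k : Fin 3) :
    pd k (fun y => f y + g y) x = pd k f x + pd k g x := by
  unfold pd
  rw [fderiv_fun_add hf hg]
  rfl

/-- First twisted de Rham composition:
curl(grad u − mskw ω) = (grad ω)ᵀ − (div ω)·I, for u C² and ω C¹ on Ω. -/
theorem stmt9 (Ω : Set V3) (hΩ : IsOpen Ω) (u ω : V3 → V3)
    (hu : ContDiffOn ℝ 2 u Ω) (hω : ContDiffOn ℝ 1 ω Ω) :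
    ∀ x ∈ Ω,
      mcurl (fun y => vgrad u y - mskw (ω y)) x =
        (vgrad ω x)ᵀ - (vdiv ω x) • (1 : M3) := by
  intro x hx
  have hu' : ∀ i, ContDiffAt ℝ 2 (fun y => u y i) x := fun i =>
    contDiffAt_pi.1 (hu.contDiffAt (hΩ.mem_nhds hx)) i
  have hw : ∀ i, DifferentiableAt ℝ (fun y => ω y i) x := fun i =>
    differentiableAt_pi.1
      ((hω.contDiffAt (hΩ.mem_nhds hx)).differentiableAt (by norm_num)) i
  have hd : ∀ i j, DifferentiableAt ℝ (fun y => pd j (fun z => u z i) y) x :=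
    fun i j => aux_diff _ x (hu' i) j
  have hsub := fun i j l k => aux_sub _ _ x (hd i j) (hw l) k
  have hadd := fun i j l k => aux_add _ _ x (hd i j) (hw l) k
  have hs := fun i j k => aux_symm _ x (hu' i) j k
  ext i j
  fin_cases i <;> fin_cases j <;>
    simp [mcurl, vcurl, vgrad, vdiv, mskw, hsub, hadd] <;>
    first
    | linarith [hs 0 0 1, hs 0 0 2, hs 0 1 2]
    | linarith [hs 1 0 1, hs 1 0 2, hs 1 1 2]
    | linarith [hs 2 0 1, hs 2 0 2, hs 2 1 2]
end
end

section
/- Let Ω ⊆ ℝ³ be open and σ, τ : ℝ³ → ℝ^{3×3} matrix fields with σ twice continuously differentiable and τ continuously differentiable on Ω. Then at every point of Ω the second twisted de Rham composition vanishes: div(curl σ + 𝒮 τ) = 2 vskw(curl τ), where curl and div act row-wise; in particular, since the row-wise divergence of a row-wise curl is zero, div(curl σ) = 0. -/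
open Matrix

noncomputable section

theorem pd_add' {f g : V3 → ℝ} {x : V3} (j : Fin 3) (hf : DifferentiableAt ℝ f x)
    (hg : DifferentiableAt ℝ g x) : pd j (fun y => f y + g y) x = pd j f x + pd j g x := by
  unfold pd
  rw [fderiv_fun_add hf hg]; rfl

theorem pd_sub' {f g : V3 → ℝ} {x : V3} (j : Fin 3) (hf : DifferentiableAt ℝ f x)
    (hg : DifferentiableAt ℝ g x) : pd j (fun y => f y - g y) x = pd j f x - pd j g x := by
  unfold pd
  rw [fderiv_fun_sub hf hg]; rfl

theorem pd_diff' {f : V3 → ℝ} {x : V3} (j : Fin 3) (hf : ContDiffAt ℝ 2 f x) :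
    DifferentiableAt ℝ (fun y => pd j f y) x := by
  have h : DifferentiableAt ℝ (fderiv ℝ f) x :=
    (hf.fderiv_right (m := 1) (by norm_num)).differentiableAt (by norm_num)
  unfold pd
  exact h.clm_apply (differentiableAt_const _)

theorem pd_pd' {f : V3 → ℝ} {x : V3} (i j : Fin 3) (hf : ContDiffAt ℝ 2 f x) :
    pd i (fun y => pd j f y) x = pd j (fun y => pd i f y) x := by
  have h : DifferentiableAt ℝ (fderiv ℝ f) x :=
    (hf.fderiv_right (m := 1) (by norm_num)).differentiableAt (by norm_num)
  have key : ∀ a b : Fin 3, pd a (fun y => pd b f y) x =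
      fderiv ℝ (fderiv ℝ f) x (Pi.single a 1) (Pi.single b 1) := by
    intro a b
    unfold pd
    rw [fderiv_clm_apply h (differentiableAt_const _)]
    simp
  rw [key, key]
  exact hf.isSymmSndFDerivAt (by simp) _ _

/-- Second twisted de Rham composition:
div(curl σ + 𝒮 τ) = 2 vskw(curl τ) and div(curl σ) = 0, for σ C² and τ C¹ on Ω. -/
theorem stmt10 (Ω : Set V3) (hΩ : IsOpen Ω) (σ τ : V3 → M3)
    (hσ : ∀ i j, ContDiffOn ℝ 2 (fun y => σ y i j) Ω)
    (hτ : ∀ i j, ContDiffOn ℝ 1 (fun y => τ y i j) Ω) :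
    ∀ x ∈ Ω,
      mdiv (fun y => mcurl σ y + Sop (τ y)) x = (2 : ℝ) • vskw (mcurl τ x) ∧
      mdiv (fun y => mcurl σ y) x = 0 := by
  intro x hx
  have hs : ∀ i j, ContDiffAt ℝ 2 (fun y => σ y i j) x :=
    fun i j => (hσ i j).contDiffAt (hΩ.mem_nhds hx)
  have ht : ∀ i j, DifferentiableAt ℝ (fun y => τ y i j) x :=
    fun i j => ((hτ i j).contDiffAt (hΩ.mem_nhds hx)).differentiableAt (by norm_num)
  have hd : ∀ k i j, DifferentiableAt ℝ (fun y => pd k (fun z => σ z i j) y) x :=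
    fun k i j => pd_diff' k (hs i j)
  have hc : ∀ i j, DifferentiableAt ℝ (fun y => mcurl σ y i j) x := by
    intro i j
    fin_cases j
    · exact (hd 1 i 2).sub (hd 2 i 1)
    · exact (hd 2 i 0).sub (hd 0 i 2)
    · exact (hd 0 i 1).sub (hd 1 i 0)
  have h2 : mdiv (fun y => mcurl σ y) x = 0 := by
    funext i
    have e0 : pd 0 (fun y => mcurl σ y i 0) x = _ := pd_sub' 0 (hd 1 i 2) (hd 2 i 1)
    have e1 : pd 1 (fun y => mcurl σ y i 1) x = _ := pd_sub' 1 (hd 2 i 0) (hd 0 i 2)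
    have e2 : pd 2 (fun y => mcurl σ y i 2) x = _ := pd_sub' 2 (hd 0 i 1) (hd 1 i 0)
    simp only [mdiv, vdiv, Pi.zero_apply]
    rw [e0, e1, e2, pd_pd' 1 0 (hs i 2), pd_pd' 2 0 (hs i 1), pd_pd' 2 1 (hs i 0)]
    ring
  refine ⟨?_, h2⟩
  have hS : ∀ i j, DifferentiableAt ℝ (fun y => Sop (τ y) i j) x := by
    intro i j
    simp only [Sop, Matrix.sub_apply, Matrix.transpose_apply, Matrix.smul_apply,
      Matrix.trace_fin_three, smul_eq_mul]
    exact (ht j i).sub ((((ht 0 0).add (ht 1 1)).add (ht 2 2)).mul_const _)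
  have h3 : mdiv (fun y => mcurl σ y + Sop (τ y)) x = mdiv (fun y => Sop (τ y)) x := by
    have : mdiv (fun y => mcurl σ y + Sop (τ y)) x
        = mdiv (fun y => mcurl σ y) x + mdiv (fun y => Sop (τ y)) x := by
      funext i
      have e : ∀ j, pd j (fun y => (mcurl σ y + Sop (τ y)) i j) x = _ :=
        fun j => pd_add' j (hc i j) (hS i j)
      simp only [mdiv, vdiv, Pi.add_apply]
      rw [e, e, e]
      ring
    rw [this, h2, zero_add]
  rw [h3]
  have hoff : ∀ k i j, i ≠ j → pd k (fun y => Sop (τ y) i j) x = pd k (fun y => τ y j i) x := by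
    intro k i j hij
    simp [Sop, Matrix.one_apply, hij]
  have hdiag : ∀ k i, pd k (fun y => Sop (τ y) i i) x = pd k (fun y => τ y i i) x -
      (pd k (fun y => τ y 0 0) x + pd k (fun y => τ y 1 1) x + pd k (fun y => τ y 2 2) x) := by
    intro k i
    rw [← pd_add' k (ht 0 0) (ht 1 1), ← pd_add' k ((ht 0 0).fun_add (ht 1 1)) (ht 2 2),
      ← pd_sub' k (ht i i) (((ht 0 0).fun_add (ht 1 1)).fun_add (ht 2 2))]
    simp [Sop, Matrix.trace_fin_three]
  funext i
  fin_cases i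
  all_goals
    simp [mdiv, vdiv, hdiag, hoff, vskw, mcurl, vcurl]
    ring
end
end

section
/- Let μ, λ, μ_c ∈ ℝ. The quadratic form A ↦ ⟨C₁(A), A⟩ on 3×3 real matrices is positive definite (i.e. ⟨C₁(A), A⟩ > 0 for all A ≠ 0) if and only if μ > 0, 3λ + 2μ > 0, and μ_c > 0. -/
open Matrix

noncomputable section

theorem quad_formula (μ lam μc : ℝ) (A : M3) :
    frobInner (C1 μ lam μc A) A =
      (2*μ/3) * ((A 0 0 - A 1 1)^2 + (A 1 1 - A 2 2)^2 + (A 0 0 - A 2 2)^2)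
      + ((3*lam + 2*μ)/3) * (A 0 0 + A 1 1 + A 2 2)^2
      + μ * ((A 0 1 + A 1 0)^2 + (A 0 2 + A 2 0)^2 + (A 1 2 + A 2 1)^2)
      + (μc/2) * ((A 0 1 - A 1 0)^2 + (A 0 2 - A 2 0)^2 + (A 1 2 - A 2 1)^2) := by
  simp [frobInner, C1, symPart, skwPart, Matrix.trace, Matrix.mul_apply, Fin.sum_univ_three,
    Matrix.one_apply]
  ring

/-- The quadratic form A ↦ ⟨C₁(A),A⟩ is positive definite
iff μ > 0, 3λ + 2μ > 0, and μ_c > 0. -/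
theorem stmt12 (μ lam μc : ℝ) :
    (∀ A : M3, A ≠ 0 → 0 < frobInner (C1 μ lam μc A) A) ↔
      (0 < μ ∧ 0 < 3*lam + 2*μ ∧ 0 < μc) := by
  constructor
  · intro h
    refine ⟨?_, ?_, ?_⟩
    · have h1 := h !![0, 1, 0; 1, 0, 0; 0, 0, 0]
        (fun e => by have := congrFun (congrFun e 0) 1; simp at this)
      rw [quad_formula] at h1
      simp at h1
      linarith
    · have h1 := h !![1, 0, 0; 0, 1, 0; 0, 0, 1]
        (fun e => by have := congrFun (congrFun e 0) 0; simp at this)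
      rw [quad_formula] at h1
      simp at h1
      linarith
    · have h1 := h !![0, 1, 0; -1, 0, 0; 0, 0, 0]
        (fun e => by have := congrFun (congrFun e 0) 1; simp at this)
      rw [quad_formula] at h1
      simp at h1
      linarith
  · rintro ⟨h1, h2, h3⟩ A hA
    rw [quad_formula]
    by_contra! hc
    apply hA
    have k1 : 0 < 2*μ/3 := by positivity
    have k2 : 0 < (3*lam + 2*μ)/3 := by positivity
    have k3 : 0 < μc/2 := by positivity
    generalize 2*μ/3 = p at *
    generalize (3*lam + 2*μ)/3 = q at *
    generalize μc/2 = r at *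
    have key : ∀ c x : ℝ, 0 < c → c * x ≤ 0 → x ≤ 0 := fun c x hc hx => by
      by_contra! hh
      have := mul_pos hc hh
      linarith
    set a := (A 0 0 - A 1 1)^2 + (A 1 1 - A 2 2)^2 + (A 0 0 - A 2 2)^2 with ha
    set b := (A 0 0 + A 1 1 + A 2 2)^2 with hb
    set c := (A 0 1 + A 1 0)^2 + (A 0 2 + A 2 0)^2 + (A 1 2 + A 2 1)^2 with hcc
    set d := (A 0 1 - A 1 0)^2 + (A 0 2 - A 2 0)^2 + (A 1 2 - A 2 1)^2 with hd
    have pa : 0 ≤ p * a := by positivity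
    have pb : 0 ≤ q * b := by positivity
    have pc : 0 ≤ μ * c := by positivity
    have pd' : 0 ≤ r * d := by positivity
    have za := key p a k1 (by linarith)
    have zb := key q b k2 (by linarith)
    have zc := key μ c h1 (by linarith)
    have zd := key r d k3 (by linarith)
    have sq0 : ∀ x : ℝ, x^2 ≤ 0 → x = 0 := fun x hx =>
      pow_eq_zero_iff two_ne_zero |>.1 (le_antisymm hx (sq_nonneg x))
    have e1 := sq0 (A 0 0 - A 1 1) (by nlinarith [sq_nonneg (A 1 1 - A 2 2), sq_nonneg (A 0 0 - A 2 2)])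
    have e2 := sq0 (A 1 1 - A 2 2) (by nlinarith [sq_nonneg (A 0 0 - A 1 1), sq_nonneg (A 0 0 - A 2 2)])
    have e3 := sq0 (A 0 0 + A 1 1 + A 2 2) zb
    have z : ∀ x y w : ℝ, x^2 + y^2 + w^2 ≤ 0 → x = 0 ∧ y = 0 ∧ w = 0 := fun x y w hx =>
      ⟨sq0 x (by linarith [sq_nonneg y, sq_nonneg w]), sq0 y (by linarith [sq_nonneg x, sq_nonneg w]),
        sq0 w (by linarith [sq_nonneg x, sq_nonneg y])⟩
    obtain ⟨f1, f2, f3⟩ := z _ _ _ zc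
    obtain ⟨g1, g2, g3⟩ := z _ _ _ zd
    ext i j
    fin_cases i <;> fin_cases j <;> simp <;> linarith
end
end

section
/- Let Ω ⊆ ℝ³ be open, μ, λ, μ_c ∈ ℝ, u : ℝ³ → ℝ³ twice continuously differentiable on Ω, and ω : ℝ³ → ℝ³ continuously differentiable on Ω. Then at every point of Ω the balance-of-linear-momentum identity div(C₁(grad u − mskw ω)) = div(𝒞(sym grad u)) − μ_c·curl(½ curl u − ω) holds, where div acts row-wise on matrix fields; i.e. the divergence of the full (generally nonsymmetric) Cosserat stress splits into the divergence of the symmetric elasticity stress σ = 𝒞(sym grad u) and the curl coupling term. -/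
open Matrix

noncomputable section

theorem aux_pd_diff (Ω : Set V3) (hΩ : IsOpen Ω) (u : V3 → V3) (hu : ContDiffOn ℝ 2 u Ω)
    (x : V3) (hx : x ∈ Ω) (i j : Fin 3) :
    DifferentiableAt ℝ (fun y => pd j (fun z => u z i) y) x := by
  have h1 : ContDiffAt ℝ 2 u x := hu.contDiffAt (hΩ.mem_nhds hx)
  have h2 : ContDiffAt ℝ 2 (fun z => u z i) x := contDiffAt_pi.1 h1 i
  have h3 : ContDiffAt ℝ 1 (fderiv ℝ (fun z => u z i)) x :=
    h2.fderiv_right (by norm_num)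
  have h4 := h3.differentiableAt (by norm_num)
  unfold pd
  exact h4.clm_apply (differentiableAt_const _)

theorem aux_pd_add (j : Fin 3) (c : ℝ) (f g : V3 → ℝ) (x : V3) (hf : DifferentiableAt ℝ f x)
    (hg : DifferentiableAt ℝ g x) :
    pd j (fun y => f y + c * g y) x = pd j f x + c * pd j g x := by
  unfold pd
  rw [fderiv_fun_add hf (hg.const_mul c), fderiv_const_mul hg]
  simp

theorem aux_pd_neg (j : Fin 3) (f : V3 → ℝ) (x : V3) :
    pd j (fun y => - f y) x = - pd j f x := by
  unfold pd
  rw [fderiv_fun_neg]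
  simp

theorem aux_pd_zero (j : Fin 3) (x : V3) : pd j (fun _ => 0) x = 0 := by
  unfold pd
  simp

theorem aux_C1 (μ lam μc : ℝ) (u : V3 → V3) (w y : V3) (i j : Fin 3) :
    C1 μ lam μc (vgrad u y - mskw w) i j =
      Cel μ lam (symPart (vgrad u y)) i j + μc * mskw ((1/2 : ℝ) • vcurl u y - w) i j := by
  fin_cases i <;> fin_cases j <;>
    simp [C1, Cel, symPart, skwPart, mskw, vcurl, vgrad, Matrix.trace, Fin.sum_univ_three,
      Matrix.vecHead, Matrix.vecTail] <;> ring

/-- Balance of linear momentum: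
div(C₁(grad u − mskw ω)) = div(𝒞(sym grad u)) − μ_c curl(½ curl u − ω). -/
theorem stmt18 (Ω : Set V3) (hΩ : IsOpen Ω) (μ lam μc : ℝ) (u ω : V3 → V3)
    (hu : ContDiffOn ℝ 2 u Ω) (hω : ContDiffOn ℝ 1 ω Ω) :
    ∀ x ∈ Ω,
      mdiv (fun y => C1 μ lam μc (vgrad u y - mskw (ω y))) x =
        mdiv (fun y => Cel μ lam (symPart (vgrad u y))) x -
        μc • vcurl (fun y => (1/2 : ℝ) • vcurl u y - ω y) x := by
  intro x hx
  have hP := aux_pd_diff Ω hΩ u hu x hx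
  have hω1 : ∀ i, DifferentiableAt ℝ (fun y => ω y i) x := fun i =>
    differentiableAt_pi.1 ((hω.contDiffAt (hΩ.mem_nhds hx)).differentiableAt (by norm_num)) i
  have hC : ∀ i j, DifferentiableAt ℝ (fun y => Cel μ lam (symPart (vgrad u y)) i j) x := by
    intro i j
    have hv : ∀ i j, DifferentiableAt ℝ (fun y => vgrad u y i j) x := hP
    simp only [Cel, symPart, Matrix.trace, Fin.sum_univ_three, Matrix.add_apply,
      Matrix.smul_apply, Matrix.transpose_apply, Matrix.diag_apply, smul_eq_mul]
    fun_prop (disch := exact hv _ _)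
  set w : V3 → V3 := fun y => (1/2 : ℝ) • vcurl u y - ω y with hw
  have hwd : ∀ i, DifferentiableAt ℝ (fun y => w y i) x := by
    intro i
    have hc : DifferentiableAt ℝ (fun y => vcurl u y i) x := by
      fin_cases i
      · exact (hP 2 1).sub (hP 1 2)
      · exact (hP 0 2).sub (hP 2 0)
      · exact (hP 1 0).sub (hP 0 1)
    exact (hc.const_mul (1/2 : ℝ)).sub (hω1 i)
  have hm : ∀ i j, DifferentiableAt ℝ (fun y => mskw (w y) i j) x := by
    have h0 := hwd 0
    have h1 := hwd 1
    have h2 := hwd 2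
    clear_value w
    intro i j
    fin_cases i <;> fin_cases j <;> simp [mskw] <;> assumption
  have key : ∀ i j k, pd k (fun y => C1 μ lam μc (vgrad u y - mskw (ω y)) i j) x =
      pd k (fun y => Cel μ lam (symPart (vgrad u y)) i j) x
        + μc * pd k (fun y => mskw (w y) i j) x := by
    intro i j k
    rw [← aux_pd_add k μc _ _ x (hC i j) (hm i j)]
    congr 1
    funext y
    exact aux_C1 μ lam μc u (ω y) y i j
  funext i
  simp only [mdiv, vdiv, key, Pi.sub_apply, Pi.smul_apply, smul_eq_mul]
  clear_value w
  fin_cases i <;> simp [mskw, vcurl, aux_pd_neg, aux_pd_zero] <;> ring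
end
end
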